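/- For every integer m ≥ 6, there exists a Gallai 3-coloring of the complete graph on 5m vertices with no monochromatic copy of the kipas K̂_m. Consequently GR_3(K̂_m) ≥ 5m + 1. -/

import Mathlib

open SimpleGraph

/-- A monochromatic copy of `H` in the graph `G` edge-colored by `c`:
an injective map sending edges of `H` to edges of `G`, all image edges of one color. -/
def IsMonoCopy {α V : Type*} {k : ℕ} (G : SimpleGraph V) (c : V → V → Fin k)
    (H : SimpleGraph α) : Prop :=
  ∃ (f : α → V) (i : Fin k), Function.Injective f ∧
    ∀ a b, H.Adj a b → G.Adj (f a) (f b) ∧ c (f a) (f b) = i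

/-- The edge coloring `c` of `G` has no rainbow triangle. -/
def NoRainbowTriangle {V : Type*} {k : ℕ} (G : SimpleGraph V) (c : V → V → Fin k) : Prop :=
  ¬ ∃ x y z : V, G.Adj x y ∧ G.Adj y z ∧ G.Adj x z ∧
    c x y ≠ c y z ∧ c y z ≠ c x z ∧ c x y ≠ c x z

/-- The Gallai–Ramsey number `GR_k(H)`: the least `N` such that every
rainbow-triangle-free `k`-edge-coloring of the complete graph on `N` vertices
contains a monochromatic copy of `H`. -/
noncomputable def GallaiRamsey (k : ℕ) {α : Type*} (H : SimpleGraph α) : ℕ :=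
  sInf {N | ∀ c : Fin N → Fin N → Fin k, (∀ x y, c x y = c y x) →
    NoRainbowTriangle (⊤ : SimpleGraph (Fin N)) c →
    IsMonoCopy (⊤ : SimpleGraph (Fin N)) c H}

/-- The diagonal two-color Ramsey number `R(H, H)`. -/
noncomputable def Ramsey2 {α : Type*} (H : SimpleGraph α) : ℕ :=
  sInf {N | ∀ c : Fin N → Fin N → Fin 2, (∀ x y, c x y = c y x) →
    IsMonoCopy (⊤ : SimpleGraph (Fin N)) c H}

/-- The fan `F_3 = K_1 + 3K_2`: vertex `0` is the center, joined to all other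
vertices, together with the three disjoint edges `12`, `34`, `56`. -/
def fanF3 : SimpleGraph (Fin 7) :=
  SimpleGraph.fromRel (fun a b => a = 0 ∨ (a.val % 2 = 1 ∧ b.val = a.val + 1))

/-- The kipas `K̂_m = K_1 + P_m`: vertex `0` is the center, joined to all other
vertices, and `1, 2, …, m` form a path. -/
def kipasG (m : ℕ) : SimpleGraph (Fin (m + 1)) :=
  SimpleGraph.fromRel (fun a b => a = 0 ∨ (1 ≤ a.val ∧ b.val = a.val + 1))

/-- The wheel `W_m = K_1 + C_m`: vertex `0` is the center, joined to all other
vertices, and `1, 2, …, m` form a cycle. -/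
def wheelG (m : ℕ) : SimpleGraph (Fin (m + 1)) :=
  SimpleGraph.fromRel (fun a b =>
    a = 0 ∨ (1 ≤ a.val ∧ b.val = a.val + 1) ∨ (a.val = m ∧ b.val = 1))

/-- The star `K_{1,n}`: vertex `0` is the center, joined to all other vertices. -/
def starG (n : ℕ) : SimpleGraph (Fin (n + 1)) :=
  SimpleGraph.fromRel (fun a _ => a = 0)

/-- `K⁺_{1,n}`, the star `K_{1,n}` with one edge subdivided: vertex `0` is joined to
`1, …, n`, and the extra vertex `n+1` is joined to `n`. -/
def starPlusG (n : ℕ) : SimpleGraph (Fin (n + 2)) :=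
  SimpleGraph.fromRel (fun a b => (a = 0 ∧ b.val ≤ n) ∨ (a.val = n ∧ b.val = n + 1))

/-- The complete graph on `Fin N` with the single edge `{0, 1}` deleted. -/
def compMinusEdge (N : ℕ) : SimpleGraph (Fin N) where
  Adj x y := x ≠ y ∧ ¬(x.val = 0 ∧ y.val = 1) ∧ ¬(x.val = 1 ∧ y.val = 0)
  symm := by
    constructor
    intro x y h
    exact ⟨h.1.symm, fun hc => h.2.2 ⟨hc.2, hc.1⟩, fun hc => h.2.1 ⟨hc.2, hc.1⟩⟩
  loopless := by constructor; intro x h; exact h.1 rfl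

/-- The complete graph on `Fin M` together with one extra vertex (`none`)
joined exactly to the vertices of `A`. -/
def addVertex (M : ℕ) (A : Set (Fin M)) : SimpleGraph (Option (Fin M)) where
  Adj x y := (∃ a b : Fin M, x = some a ∧ y = some b ∧ a ≠ b) ∨
    (∃ a ∈ A, (x = some a ∧ y = none) ∨ (x = none ∧ y = some a))
  symm := by
    constructor
    rintro x y (⟨a, b, hx, hy, hab⟩ | ⟨a, ha, (⟨hx, hy⟩ | ⟨hx, hy⟩)⟩)
    · exact Or.inl ⟨b, a, hy, hx, hab.symm⟩
    · exact Or.inr ⟨a, ha, Or.inr ⟨hy, hx⟩⟩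
    · exact Or.inr ⟨a, ha, Or.inl ⟨hy, hx⟩⟩
  loopless := by
    constructor
    rintro x (⟨a, b, hx, hy, hab⟩ | ⟨a, ha, (⟨hx, hy⟩ | ⟨hx, hy⟩)⟩) <;> simp_all

/-- The star-critical Gallai–Ramsey number `GR*_k(H)`: the least `s` such that
every rainbow-triangle-free `k`-edge-coloring of the complete graph on
`GR_k(H) - 1` vertices plus one extra vertex joined to exactly `s` of them
contains a monochromatic copy of `H`. -/
noncomputable def GRstar (k : ℕ) {α : Type*} (H : SimpleGraph α) : ℕ :=
  sInf {s | ∀ A : Finset (Fin (GallaiRamsey k H - 1)), A.card = s →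
    ∀ c : Option (Fin (GallaiRamsey k H - 1)) → Option (Fin (GallaiRamsey k H - 1)) → Fin k,
      (∀ x y, c x y = c y x) →
      NoRainbowTriangle (addVertex (GallaiRamsey k H - 1) (↑A)) c →
      IsMonoCopy (addVertex (GallaiRamsey k H - 1) (↑A)) c H}

/-- `H` is Gallai-Ramsey-full for `k` colors: the complete graph on `GR_k(H)`
vertices minus one edge admits a rainbow-triangle-free `k`-edge-coloring with
no monochromatic copy of `H`. -/
def GallaiRamseyFull (k : ℕ) {α : Type*} (H : SimpleGraph α) : Prop :=
  ∃ c : Fin (GallaiRamsey k H) → Fin (GallaiRamsey k H) → Fin k,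
    (∀ x y, c x y = c y x) ∧
    NoRainbowTriangle (compMinusEdge (GallaiRamsey k H)) c ∧
    ¬ IsMonoCopy (compMinusEdge (GallaiRamsey k H)) c H

/-- Reachability inside the vertex set `s`: there is a walk all of whose
vertices lie in `s`. -/
def ReachableWithin {V : Type*} (R : SimpleGraph V) (s : Set V) (u v : V) : Prop :=
  ∃ w : R.Walk u v, ∀ x ∈ w.support, x ∈ s



/-- Pentagon coloring with color `2` on the diagonal. -/
def pentCol (a b : Fin 5) : Fin 3 :=
  if a = b then 2 else if a = b + 1 ∨ b = a + 1 then 0 else 1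

theorem pentCol_symm : ∀ a b, pentCol a b = pentCol b a := by decide

theorem pentCol_gallai : ∀ a b d, ¬ (pentCol a b ≠ pentCol b d ∧ pentCol b d ≠ pentCol a d ∧
    pentCol a b ≠ pentCol a d) := by decide

theorem pentCol_triangle : ∀ a b d, pentCol a b = pentCol a d → pentCol a b = pentCol b d →
    a = b := by decide

/-- The residue class mod 5 of a vertex. -/
def resid {N : ℕ} (x : Fin N) : Fin 5 := ⟨x.val % 5, Nat.mod_lt _ (by norm_num)⟩

theorem kipas_coloring (m : ℕ) (hm : 6 ≤ m) :
    ∃ c : Fin (5 * m) → Fin (5 * m) → Fin 3, (∀ x y, c x y = c y x) ∧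
      NoRainbowTriangle (⊤ : SimpleGraph (Fin (5 * m))) c ∧
      ¬ IsMonoCopy (⊤ : SimpleGraph (Fin (5 * m))) c (kipasG m) := by
  refine ⟨fun x y => pentCol (resid x) (resid y), fun x y => pentCol_symm _ _, ?_, ?_⟩
  · rintro ⟨x, y, z, -, -, -, h⟩
    exact pentCol_gallai _ _ _ h
  · rintro ⟨f, i, hf, h⟩
    have h0 : ∀ b : Fin (m + 1), b ≠ 0 → pentCol (resid (f 0)) (resid (f b)) = i := by
      intro b hb
      exact (h 0 b (by simp [kipasG, hb.symm])).2
    have h1 : ∀ a b : Fin (m + 1), 1 ≤ a.val → b.val = a.val + 1 →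
        pentCol (resid (f a)) (resid (f b)) = i := by
      intro a b ha hb
      refine (h a b ?_).2
      simp only [kipasG, SimpleGraph.fromRel_adj]
      refine ⟨?_, Or.inl (Or.inr ⟨ha, hb⟩)⟩
      intro hab
      rw [hab] at hb
      omega
    have key : ∀ a b : Fin (m + 1), 1 ≤ a.val → b.val = a.val + 1 →
        resid (f 0) = resid (f a) ∧ resid (f 0) = resid (f b) := by
      intro a b ha hb
      have ha0 : a ≠ 0 := by rintro rfl; simp at ha
      have hb0 : b ≠ 0 := by rintro rfl; simp at hb
      have e1 := h0 a ha0
      have e2 := h0 b hb0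
      have e3 := h1 a b ha hb
      refine ⟨pentCol_triangle _ _ (resid (f b)) (by rw [e1, e2]) (by rw [e1, e3]),
        pentCol_triangle _ _ (resid (f a)) (by rw [e1, e2]) ?_⟩
      rw [e2, pentCol_symm, e3]
    have all : ∀ a : Fin (m + 1), resid (f 0) = resid (f a) := by
      intro a
      rcases Nat.lt_or_ge a.val 1 with ha | ha
      · have : a = 0 := Fin.ext (by rw [Fin.val_zero]; omega)
        rw [this]
      · rcases Nat.lt_or_ge a.val m with hlt | hge
        · exact (key a ⟨a.val + 1, by omega⟩ ha rfl).1
        · exact (key ⟨a.val - 1, by omega⟩ a (by simp; omega) (by simp; omega)).2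
    have hinj : Function.Injective
        (fun a : Fin (m + 1) => (⟨(f a).val / 5, by have := (f a).2; omega⟩ : Fin m)) := by
      intro a b hab
      apply hf
      have ea := all a
      have eb := all b
      rw [ea] at eb
      simp only [resid, Fin.mk.injEq] at eb hab
      ext
      omega
    have := Fintype.card_le_of_injective _ hinj
    simp at this

theorem ramsey_multi (k : ℕ) : ∀ (n : ℕ) (s : Fin k → ℕ), ∑ i, s i = n → ∃ N : ℕ, 0 < N ∧
    ∀ (c : ℕ → ℕ → Fin k), (∀ x y, c x y = c y x) → ∀ A : Finset ℕ, N ≤ A.card →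
      ∃ (i : Fin k) (B : Finset ℕ), B ⊆ A ∧ B.card = s i ∧
        ∀ x ∈ B, ∀ y ∈ B, x ≠ y → c x y = i := by
  intro n
  induction n with
  | zero =>
    intro s hs
    refine ⟨1, one_pos, fun c hc A hA => ?_⟩
    have hs' : s (c 0 0) = 0 := by
      have := Finset.single_le_sum (f := s) (fun i _ => Nat.zero_le _) (Finset.mem_univ (c 0 0))
      omega
    exact ⟨c 0 0, ∅, by simp, by simp [hs'], by simp⟩
  | succ n ih =>
    intro s hs
    by_cases hz : ∃ i, s i = 0
    · obtain ⟨i, hi⟩ := hz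
      exact ⟨1, one_pos, fun c hc A hA => ⟨i, ∅, by simp, by simp [hi], by simp⟩⟩
    · push Not at hz
      have hstep : ∀ i, ∑ j, Function.update s i (s i - 1) j = n := by
        intro i
        have h1 := Finset.add_sum_erase Finset.univ s (Finset.mem_univ i)
        have h2 := Finset.add_sum_erase Finset.univ (Function.update s i (s i - 1))
          (Finset.mem_univ i)
        have h3 : ∑ j ∈ Finset.univ.erase i, Function.update s i (s i - 1) j =
            ∑ j ∈ Finset.univ.erase i, s j := by
          apply Finset.sum_congr rfl
          intro j hj
          rw [Function.update_of_ne (Finset.ne_of_mem_erase hj)]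
        rw [h3, Function.update_self] at h2
        have := hz i
        omega
      choose M hM0 hM using fun i => ih _ (hstep i)
      refine ⟨1 + ∑ i, M i, by omega, fun c hc A hA => ?_⟩
      obtain ⟨v, hv⟩ : A.Nonempty := Finset.card_pos.mp (by omega)
      have hex : ∃ i, M i ≤ ((A.erase v).filter (fun x => c v x = i)).card := by
        by_contra! hcon
        have h1 := Finset.card_eq_sum_card_fiberwise (s := A.erase v) (t := Finset.univ)
          (f := fun x => c v x) (fun _ _ => Finset.mem_coe.mpr (Finset.mem_univ _))
        have h2 : (A.erase v).card = A.card - 1 := Finset.card_erase_of_mem hv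
        have h4 : ∑ i, ((A.erase v).filter (fun x => c v x = i)).card < ∑ i, M i :=
          Finset.sum_lt_sum_of_nonempty ⟨c 0 0, Finset.mem_univ _⟩ (fun i _ => hcon i)
        omega
      obtain ⟨i, hi⟩ := hex
      obtain ⟨j, B, hBA, hBc, hB⟩ := hM i c hc _ hi
      have hsub : B ⊆ A := fun x hx =>
        Finset.mem_of_mem_erase (Finset.mem_filter.mp (hBA hx)).1
      by_cases hji : j = i
      · subst hji
        rw [Function.update_self] at hBc
        have hvB : v ∉ B := fun h => by
          have := (Finset.mem_filter.mp (hBA h)).1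
          simp at this
        refine ⟨j, insert v B, Finset.insert_subset hv hsub, ?_, ?_⟩
        · rw [Finset.card_insert_of_notMem hvB, hBc]
          have := hz j
          omega
        · have hvc : ∀ x ∈ B, c v x = j := fun x hx => (Finset.mem_filter.mp (hBA hx)).2
          intro x hx y hy hxy
          rcases Finset.mem_insert.mp hx with rfl | hxB
          · rcases Finset.mem_insert.mp hy with rfl | hy
            · exact absurd rfl hxy
            · exact hvc y hy
          · rcases Finset.mem_insert.mp hy with rfl | hy
            · rw [hc]; exact hvc x hxB
            · exact hB x hxB y hy hxy
      · rw [Function.update_of_ne hji] at hBc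
        exact ⟨j, B, hsub, hBc, hB⟩

theorem ramsey_exists (k m : ℕ) (H : SimpleGraph (Fin m)) : ∃ N : ℕ,
    ∀ c : Fin N → Fin N → Fin k, (∀ x y, c x y = c y x) →
      NoRainbowTriangle (⊤ : SimpleGraph (Fin N)) c →
      IsMonoCopy (⊤ : SimpleGraph (Fin N)) c H := by
  obtain ⟨N, hN0, hN⟩ := ramsey_multi k _ (fun _ => m) rfl
  refine ⟨N, fun c hc _ => ?_⟩
  let g : ℕ → Fin N := fun x => ⟨x % N, Nat.mod_lt _ hN0⟩
  obtain ⟨i, B, hBA, hBc, hB⟩ := hN (fun x y => c (g x) (g y)) (fun x y => hc _ _)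
    (Finset.range N) (by simp)
  let e := B.orderEmbOfFin hBc
  have hmem : ∀ a, e a ∈ B := fun a => Finset.orderEmbOfFin_mem B hBc a
  have hinj : Function.Injective (fun a => g (e a)) := by
    intro a b hab
    have ha := Finset.mem_range.mp (hBA (hmem a))
    have hb := Finset.mem_range.mp (hBA (hmem b))
    simp only [g, Fin.mk.injEq, Nat.mod_eq_of_lt ha, Nat.mod_eq_of_lt hb] at hab
    exact e.injective hab
  refine ⟨fun a => g (e a), i, hinj, fun a b hab => ⟨?_, ?_⟩⟩
  · exact fun h => hab.ne (hinj h)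
  · exact hB _ (hmem a) _ (hmem b) (fun h => hab.ne (e.injective h))

/-- For every `m ≥ 6` there is a Gallai 3-coloring of `K_{5m}` with no
monochromatic kipas `K̂_m`; consequently `GR_3(K̂_m) ≥ 5m + 1`. -/
theorem kipas_gallai3_lower_5m (m : ℕ) (hm : 6 ≤ m) :
    (∃ c : Fin (5 * m) → Fin (5 * m) → Fin 3, (∀ x y, c x y = c y x) ∧
      NoRainbowTriangle (⊤ : SimpleGraph (Fin (5 * m))) c ∧
      ¬ IsMonoCopy (⊤ : SimpleGraph (Fin (5 * m))) c (kipasG m)) ∧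
    5 * m + 1 ≤ GallaiRamsey 3 (kipasG m) := by
  refine ⟨kipas_coloring m hm, ?_⟩
  obtain ⟨c, hc, hg, hn⟩ := kipas_coloring m hm
  have hne := ramsey_exists 3 (m + 1) (kipasG m)
  have hmem := Nat.sInf_mem (s := {N | ∀ c : Fin N → Fin N → Fin 3, (∀ x y, c x y = c y x) →
    NoRainbowTriangle (⊤ : SimpleGraph (Fin N)) c →
    IsMonoCopy (⊤ : SimpleGraph (Fin N)) c (kipasG m)}) hne
  change GallaiRamsey 3 (kipasG m) ∈ _ at hmem
  by_contra hlt
  have hle : GallaiRamsey 3 (kipasG m) ≤ 5 * m := by omega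
  apply hn
  have hinj := Fin.castLE_injective hle
  obtain ⟨f, i, hf, h⟩ := hmem (fun x y => c (Fin.castLE hle x) (Fin.castLE hle y))
    (fun x y => hc _ _) (by
      rintro ⟨x, y, z, h1, h2, h3, h⟩
      exact hg ⟨Fin.castLE hle x, Fin.castLE hle y, Fin.castLE hle z,
        fun e => h1 (hinj e), fun e => h2 (hinj e), fun e => h3 (hinj e), h⟩)
  exact ⟨fun a => Fin.castLE hle (f a), i, hinj.comp hf, fun a b hab =>
    ⟨fun e => (h a b hab).1 (hinj e), (h a b hab).2⟩⟩
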